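/- arXiv:1411.3173 — 3 statements merged into one kernel-verified Lean document; each statement's English description precedes it below -/
import Mathlib

section
/- Let Y = ∏_{t∈(0,1]} X_t where X_t = ℕ with the discrete topology for every t ∈ (0,1], and for i ∈ {1,2} let F_i = {y = (y_t)_{t∈(0,1]} ∈ Y : for every n ∈ ℕ with n ≠ i, the set {t ∈ (0,1] : y_t = n} has at most one element}. Then F₁ and F₂ are closed subsets of Y and F₁ ∩ F₂ = ∅. -/
open Set Topology

/-- A topological space is pseudo-ℵ₁-compact if every locally finite family of
(pairwise distinct) nonempty open subsets is at most countable. -/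
def PseudoAleph1Compact (Z : Type*) [TopologicalSpace Z] : Prop :=
  ∀ 𝒰 : Set (Set Z), (∀ U ∈ 𝒰, IsOpen U) → (∀ U ∈ 𝒰, U.Nonempty) →
    LocallyFinite (fun U : 𝒰 => (U : Set Z)) → 𝒰.Countable

/-- `A` is functionally closed in `Z` if it is the zero set of a continuous real function. -/
def FunctionallyClosed {Z : Type*} [TopologicalSpace Z] (A : Set Z) : Prop :=
  ∃ f : Z → ℝ, Continuous f ∧ A = f ⁻¹' {0}

/-- `A` is functionally open in `Z` if its complement is functionally closed. -/
def FunctionallyOpen {Z : Type*} [TopologicalSpace Z] (A : Set Z) : Prop :=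
  FunctionallyClosed Aᶜ

/-- `FunClass Z true α A` : `A` is of the functionally additive class `α` in `Z`;
`FunClass Z false α A` : `A` is of the functionally multiplicative class `α` in `Z`. -/
inductive FunClass (Z : Type*) [TopologicalSpace Z] : Bool → Ordinal.{0} → Set Z → Prop
  | open_ (A : Set Z) (h : FunctionallyOpen A) : FunClass Z true 0 A
  | closed_ (A : Set Z) (h : FunctionallyClosed A) : FunClass Z false 0 A
  | union (α : Ordinal.{0}) (A : ℕ → Set Z) (β : ℕ → Ordinal.{0}) (hα : α ≠ 0)
      (hβ : ∀ n, β n < α) (h : ∀ n, FunClass Z false (β n) (A n)) :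
      FunClass Z true α (⋃ n, A n)
  | inter (α : Ordinal.{0}) (A : ℕ → Set Z) (β : ℕ → Ordinal.{0}) (hα : α ≠ 0)
      (hβ : ∀ n, β n < α) (h : ∀ n, FunClass Z true (β n) (A n)) :
      FunClass Z false α (⋂ n, A n)

/-- `A` is α-embedded in `Z` if every subset of `A` of functionally multiplicative class `α`
in the subspace `A` is the trace on `A` of a set of functionally multiplicative class `α` in `Z`. -/
def IsAlphaEmbedded {Z : Type*} [TopologicalSpace Z] (α : Ordinal.{0}) (A : Set Z) : Prop :=
  ∀ B : Set Z, B ⊆ A → FunClass ↥A false α (Subtype.val ⁻¹' B) →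
    ∃ C : Set Z, FunClass Z false α C ∧ C ∩ A = B

/-- `Z` is α-universal if every subset of `Z` is α-embedded in `Z`. -/
def AlphaUniversal (Z : Type*) [TopologicalSpace Z] (α : Ordinal.{0}) : Prop :=
  ∀ A : Set Z, IsAlphaEmbedded α A

/-- The projection of the product `∀ t, X t` onto the coordinates in `S`. -/
def proj {T : Type*} {X : T → Type*} (S : Set T) (x : ∀ t, X t) : ∀ t : S, X t.1 :=
  fun t => x t.1

/-- A functionally measurable (Baire) set: a member of some functionally additive or
multiplicative class `α` with `α < ω₁`. -/
def FunctionallyMeasurable {Z : Type*} [TopologicalSpace Z] (A : Set Z) : Prop :=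
  ∃ (b : Bool) (β : Ordinal.{0}), β < (Cardinal.aleph 1).ord ∧ FunClass Z b β A

/-- `Y` has a regular `Gδ`-diagonal. -/
def RegularGDeltaDiagonal (Y : Type*) [TopologicalSpace Y] : Prop :=
  ∃ G : ℕ → Set (Y × Y), (∀ n, IsOpen (G n)) ∧
    {p : Y × Y | p.1 = p.2} = ⋂ n, G n ∧
    {p : Y × Y | p.1 = p.2} = ⋂ n, closure (G n)

/-- The natural numbers `{1, 2, 3, ...}` with the discrete topology
(as a subspace of the discrete space `ℕ`). -/
abbrev PosNat : Type := {n : ℕ // 0 < n}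

/-- The product `Y = ℕ^{(0,1]}` where `ℕ = {1,2,...}` is discrete. -/
abbrev Yprod : Type := ↥(Set.Ioc (0 : ℝ) 1) → PosNat

/-- Stone's set `F i = {y ∈ Y : |{t : y t = n}| ≤ 1 for every n ≠ i}`. -/
def Fset (i : PosNat) : Set Yprod :=
  {y | ∀ n : PosNat, n ≠ i → {t : ↥(Set.Ioc (0 : ℝ) 1) | y t = n}.Subsingleton}

/-- The product `X = [0,1] × ℕ^{(0,1]}`. -/
abbrev Xprod : Type := ↥(Set.Icc (0 : ℝ) 1) × Yprod

/-!
A point lies in `F i` exactly when any two distinct coordinates with a common value have the value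
`i`. For each pair of coordinates this is a clopen condition, the factors being discrete, so `F i`
is closed. If `i ≠ j`, a common value cannot be both `i` and `j`, so the points of `F i ∩ F j` are
the injections `(0,1] → ℕ`; there are none, as `(0,1]` is uncountable.
-/

section SubsingletonFibersExcept

variable {ι α : Type*}

/-- Stone's set over an arbitrary index type `ι` and value type `α`: the functions `ι → α` all of
whose fibers, except possibly the one over `i`, have at most one element. The fibers are written as
in `Fset`, so that `Fset i` is definitionally the case `ι = (0,1]`. -/
def subsingletonFibersExcept (ι : Type*) {α : Type*} (i : α) : Set (ι → α) :=
  {y | ∀ n : α, n ≠ i → {t : ι | y t = n}.Subsingleton}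

theorem mem_subsingletonFibersExcept_iff {i : α} {y : ι → α} :
    y ∈ subsingletonFibersExcept ι i ↔ ∀ s t, s ≠ t → y s = y t → y s = i := by
  constructor
  · intro hy s t hst hyst
    by_contra hne
    exact hst (hy (y s) hne rfl hyst.symm)
  · rintro hy n hn s rfl t hts
    by_contra hst
    exact hn (hy s t hst hts.symm)

theorem isClosed_subsingletonFibersExcept [TopologicalSpace α] [DiscreteTopology α] (i : α) :
    IsClosed (subsingletonFibersExcept ι i) := by
  have hpair (s t : ι) : IsClosed {y : ι → α | y s = y t → y s = i} := by
    have hcont : Continuous fun y : ι → α => (y s, y t) := by fun_prop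
    exact (isClosed_discrete {p : α × α | p.1 = p.2 → p.1 = i}).preimage hcont
  have hinter : subsingletonFibersExcept ι i =
      ⋂ (s : ι) (t : ι) (_ : s ≠ t), {y : ι → α | y s = y t → y s = i} := by
    ext y
    simp only [mem_subsingletonFibersExcept_iff, mem_iInter, mem_ofPred_eq]
  rw [hinter]
  exact isClosed_iInter fun s => isClosed_iInter fun t => isClosed_iInter fun _ => hpair s t

theorem subsingletonFibersExcept_inter_eq_injective {i j : α} (hij : i ≠ j) :
    subsingletonFibersExcept ι i ∩ subsingletonFibersExcept ι j =
      {y | Function.Injective y} := by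
  ext y
  simp only [mem_inter_iff, mem_subsingletonFibersExcept_iff, mem_ofPred_eq]
  constructor
  · rintro ⟨hi, hj⟩ s t hyst
    by_contra hst
    exact hij ((hi s t hst hyst).symm.trans (hj s t hst hyst))
  · intro hy
    exact ⟨fun s t hst hyst => absurd (hy hyst) hst, fun s t hst hyst => absurd (hy hyst) hst⟩

theorem statement13_general [TopologicalSpace α] [DiscreteTopology α] (hια : IsEmpty (ι ↪ α))
    {i j : α} (hij : i ≠ j) :
    IsClosed (subsingletonFibersExcept ι i) ∧ IsClosed (subsingletonFibersExcept ι j) ∧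
      subsingletonFibersExcept ι i ∩ subsingletonFibersExcept ι j = ∅ := by
  refine ⟨isClosed_subsingletonFibersExcept i, isClosed_subsingletonFibersExcept j, ?_⟩
  rw [subsingletonFibersExcept_inter_eq_injective hij]
  exact eq_empty_of_forall_notMem fun y hy => hια.false ⟨y, hy⟩

end SubsingletonFibersExcept

theorem isEmpty_embedding_of_uncountable_of_countable (ι α : Type*) [Uncountable ι]
    [Countable α] : IsEmpty (ι ↪ α) :=
  ⟨fun f => not_injective_uncountable_countable f f.injective⟩

theorem uncountable_Ioc_real {a b : ℝ} (hab : a < b) : Uncountable (Ioc a b) :=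
  not_countable_iff.mp fun h => hab.not_ge (Cardinal.Real.Ioc_countable_iff.mp h)

/-- `F₁` and `F₂` are closed and disjoint in `Y`. -/
theorem statement13 :
    IsClosed (Fset ⟨1, one_pos⟩) ∧ IsClosed (Fset ⟨2, two_pos⟩) ∧
    Fset ⟨1, one_pos⟩ ∩ Fset ⟨2, two_pos⟩ = ∅ := by
  have : Uncountable (Ioc (0 : ℝ) 1) := uncountable_Ioc_real zero_lt_one
  exact statement13_general (isEmpty_embedding_of_uncountable_of_countable _ _) (by decide)
end

section
/- Let Y = ∏_{t∈(0,1]} X_t where X_t = ℕ with the discrete topology for every t ∈ (0,1], and for i ∈ {1,2} let F_i = {y = (y_t)_{t∈(0,1]} ∈ Y : for every n ∈ ℕ with n ≠ i, the set {t ∈ (0,1] : y_t = n} has at most one element}. Then for each i ∈ {1,2} the subspace F_i of Y is pseudo-ℵ₁-compact. -/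
/-!
In a product of countable spaces with a base point `p`, every uncountable family `z` of points that
differ from `p` in at most `k` coordinates has a cluster point, by induction on `k`: if `p` is not
one, then all but finitely many `z a` differ from `p` within a fixed finite set of coordinates, so
uncountably many of them share a value `n ≠ p t` at one coordinate `t`. Resetting that coordinate to
`p t` lowers `k`, and writing `n` back is continuous.

An uncountable family of points that differ from `p` in finitely many coordinates has an uncountable
subfamily with a common bound `k`, hence a cluster point. In a closed set `F` such points are dense
as soon as `F` contains, with each `x`, the points that agree with `x` on a finite set of
coordinates and with `p` elsewhere. Stone's set has both properties for `p` constant equal to `i`.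
-/

open Set Topology

section ClusterPoints

open Filter

variable {Z ι : Type*} [TopologicalSpace Z]

lemma not_mapClusterPt_cofinite_of_locallyFinite {f : ι → Set Z} (hf : LocallyFinite f)
    {z : ι → Z} (hz : ∀ a, z a ∈ f a) (y : Z) : ¬ MapClusterPt y cofinite z := by
  intro hy
  obtain ⟨V, hV, hfin⟩ := hf y
  refine frequently_cofinite_iff_infinite.1 (mapClusterPt_iff_frequently.1 hy V hV) ?_
  exact hfin.subset fun a ha => ⟨z a, hz a, ha⟩

lemma exists_mapClusterPt_cofinite_of_subset {z : ι → Z} {A : Set ι}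
    (h : ∃ y, MapClusterPt y cofinite fun a : A => z a) : ∃ y, MapClusterPt y cofinite z :=
  h.imp fun _ hy => hy.of_comp Subtype.val_injective.tendsto_cofinite

lemma exists_uncountable_fiber {κ : Type*} [Uncountable ι] [Countable κ] (g : ι → κ) :
    ∃ k, Uncountable {a | g a = k} := by
  by_contra! h
  have hcover : ⋃ k, {a | g a = k} = univ := iUnion_eq_univ_iff.2 fun a => ⟨g a, rfl⟩
  exact not_countable_univ (hcover ▸ countable_iUnion fun k => countable_coe_iff.1 (h k))

end ClusterPoints

universe u

lemma pseudoAleph1Compact_of_dense {Z : Type u} [TopologicalSpace Z] {D : Set Z} (hD : Dense D)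
    (hcluster : ∀ (ι : Type u) [Uncountable ι] (z : ι → Z), (∀ a, z a ∈ D) →
      ∃ y, MapClusterPt y Filter.cofinite z) :
    PseudoAleph1Compact Z := by
  intro 𝒰 hopen hne hlf
  by_contra hunc
  have : Uncountable 𝒰 := not_countable_iff.1 fun h => hunc (countable_coe_iff.1 h)
  choose z hzU hzD using fun U : 𝒰 => hD.inter_open_nonempty U (hopen U U.2) (hne U U.2)
  obtain ⟨y, hy⟩ := hcluster 𝒰 z hzD
  exact not_mapClusterPt_cofinite_of_locallyFinite hlf hzU y hy

section Product

open Filter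

variable {T : Type*} {X : T → Type*}

/-- The support of `x` relative to the base point `p` of a product. The points with finite support
form the σ-product at `p`. -/
def relSupport (p x : ∀ t, X t) : Set T :=
  {t | x t ≠ p t}

lemma relSupport_eq_empty {p x : ∀ t, X t} : relSupport p x = ∅ ↔ x = p := by
  simp [relSupport, Set.eq_empty_iff_forall_notMem, funext_iff]

lemma relSupport_update [DecidableEq T] (p x : ∀ t, X t) (t : T) :
    relSupport p (Function.update x t (p t)) = relSupport p x \ {t} := by
  ext s
  by_cases hst : s = t
  · subst hst
    simp [relSupport]
  · simp [relSupport, hst]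

lemma relSupport_piecewise_subset [DecidableEq T] (p x : ∀ t, X t) (I : Finset T) :
    relSupport p (I.piecewise x p) ⊆ I := fun t ht => by
  by_contra htI
  exact ht (I.piecewise_eq_of_notMem x p htI)

variable [∀ t, TopologicalSpace (X t)]

lemma exists_finset_piecewise_mem [DecidableEq T] (p : ∀ t, X t) {x : ∀ t, X t}
    {V : Set (∀ t, X t)} (hV : IsOpen V) (hx : x ∈ V) : ∃ I : Finset T, I.piecewise x p ∈ V := by
  obtain ⟨I, u, hu, hIV⟩ := isOpen_pi_iff.1 hV x hx
  refine ⟨I, hIV fun t ht => ?_⟩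
  rw [I.piecewise_eq_of_mem x p ht]
  exact (hu t ht).2

lemma dense_setOf_finite_relSupport [DecidableEq T] {p : ∀ t, X t} {F : Set (∀ t, X t)}
    (htrunc : ∀ x ∈ F, ∀ I : Finset T, I.piecewise x p ∈ F) :
    Dense {x : F | (relSupport p x.1).Finite} := by
  refine dense_iff_inter_open.2 fun U hU ⟨x, hx⟩ => ?_
  obtain ⟨V, hV, rfl⟩ := isOpen_induced_iff.1 hU
  obtain ⟨I, hI⟩ := exists_finset_piecewise_mem p hV hx
  exact ⟨⟨I.piecewise x p, htrunc x x.2 I⟩, hI,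
    I.finite_toSet.subset (relSupport_piecewise_subset p x I)⟩

section UncountableFamily

variable {ι : Type*} [Uncountable ι] [∀ t, Countable (X t)]

lemma exists_uncountable_setOf_apply_eq {p : ∀ t, X t} {z : ι → ∀ t, X t}
    (hp : ¬ MapClusterPt p cofinite z) :
    ∃ t, ∃ n ≠ p t, Uncountable {a | z a t = n} := by
  simp only [mapClusterPt_iff_frequently, not_forall, frequently_cofinite_iff_infinite,
    not_infinite] at hp
  obtain ⟨V, hV, hfin⟩ := hp
  obtain ⟨S, u, hu, hSV⟩ := mem_pi'.1 (nhds_pi (a := p) ▸ hV)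
  by_contra! hcount
  have hdiffer : {a | ∃ t ∈ S, z a t ≠ p t}.Countable := by
    have hunion : (⋃ t ∈ S, ⋃ n : {n // n ≠ p t}, {a | z a t = n.1}).Countable :=
      S.countable_toSet.biUnion fun t _ =>
        countable_iUnion fun n => countable_coe_iff.1 (hcount t n n.2)
    refine hunion.mono fun a ⟨t, ht, hne⟩ => ?_
    simp only [mem_iUnion]
    exact ⟨t, ht, ⟨z a t, hne⟩, rfl⟩
  refine not_countable_univ ((hfin.countable.union hdiffer).mono fun a _ => ?_)
  refine or_iff_not_imp_right.2 fun hagree => hSV fun t ht => ?_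
  have heq : z a t = p t := by_contra fun hne => hagree ⟨t, ht, hne⟩
  exact heq ▸ mem_of_mem_nhds (hu t)

lemma exists_mapClusterPt_of_encard_relSupport_le (p : ∀ t, X t) (k : ℕ) (z : ι → ∀ t, X t)
    (hz : ∀ a, (relSupport p (z a)).encard ≤ k) : ∃ y, MapClusterPt y cofinite z := by
  classical
  induction k generalizing ι with
  | zero =>
    have hconst : z = fun _ => p := funext fun a =>
      relSupport_eq_empty.1 (encard_eq_zero.1 (nonpos_iff_eq_zero.1 (hz a)))
    exact ⟨p, hconst ▸ tendsto_const_nhds.mapClusterPt⟩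
  | succ k ih =>
    by_cases hp : MapClusterPt p cofinite z
    · exact ⟨p, hp⟩
    obtain ⟨t, n, hn, hA⟩ := exists_uncountable_setOf_apply_eq hp
    set A := {a | z a t = n}
    have hreset (a : A) : (relSupport p (Function.update (z a) t (p t))).encard ≤ k := by
      have ht : t ∈ relSupport p (z a) := fun h => hn (a.2.symm.trans h)
      rw [relSupport_update, ← ENat.add_le_add_iff_right ENat.one_ne_top,
        encard_sdiff_singleton_add_one ht]
      exact hz a
    obtain ⟨y, hy⟩ := ih (fun a : A => Function.update (z a) t (p t)) hreset
    have hrestore : Continuous fun w : ∀ t, X t => Function.update w t n :=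
      continuous_id.update t continuous_const
    have hrestored (a : A) : Function.update (Function.update (z a) t (p t)) t n = z a := by
      rw [Function.update_idem, ← a.2, Function.update_eq_self]
    refine exists_mapClusterPt_cofinite_of_subset (A := A) ⟨Function.update y t n, ?_⟩
    simpa only [Function.comp_def, hrestored] using hy.continuousAt_comp hrestore.continuousAt

lemma exists_mapClusterPt_of_finite_relSupport (p : ∀ t, X t) (z : ι → ∀ t, X t)
    (hz : ∀ a, (relSupport p (z a)).Finite) : ∃ y, MapClusterPt y cofinite z := by
  obtain ⟨k, hk⟩ := exists_uncountable_fiber fun a => (relSupport p (z a)).ncard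
  set A := {a | (relSupport p (z a)).ncard = k}
  refine exists_mapClusterPt_cofinite_of_subset (A := A)
    (exists_mapClusterPt_of_encard_relSupport_le p k (fun a : A => z a) fun a => ?_)
  rw [← (hz a).cast_ncard_eq, a.2]

end UncountableFamily

theorem pseudoAleph1Compact_of_isClosed_of_piecewise_mem [∀ t, Countable (X t)] [DecidableEq T]
    {p : ∀ t, X t} {F : Set (∀ t, X t)} (hF : IsClosed F)
    (htrunc : ∀ x ∈ F, ∀ I : Finset T, I.piecewise x p ∈ F) :
    PseudoAleph1Compact F := by
  refine pseudoAleph1Compact_of_dense (dense_setOf_finite_relSupport htrunc) ?_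
  intro ι _ z hz
  obtain ⟨y, hy⟩ := exists_mapClusterPt_of_finite_relSupport p (fun a => (z a).1) hz
  have hyF : y ∈ F := hF.mem_of_mapClusterPt hy (Eventually.of_forall fun a => (z a).2)
  exact ⟨⟨y, hyF⟩, (IsInducing.subtypeVal.mapClusterPt_iff (x := ⟨y, hyF⟩)).1
    (mapClusterPt_comp.1 hy)⟩

end Product

section StoneSet

variable {T X : Type*}

/-- Stone's set in the power `X ^ T`: the functions that take every value except possibly `i` at
most once. `Fset i` is the case `T = (0, 1]`, `X = {1, 2, ...}`. -/
def stoneSet (T : Type*) {X : Type*} (i : X) : Set (T → X) :=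
  {y | ∀ n, n ≠ i → {t | y t = n}.Subsingleton}

lemma isClosed_stoneSet [TopologicalSpace X] [DiscreteTopology X] (i : X) :
    IsClosed (stoneSet T i) := by
  have hopen (n : X) (t : T) : IsOpen {y : T → X | y t = n} :=
    (isOpen_discrete {n}).preimage (continuous_apply (A := fun _ => X) t)
  have hinter : stoneSet T i =
      ⋂ (n) (_ : n ≠ i) (t) (s), {y : T → X | y t = n → y s = n → t = s} := by
    ext y
    simp only [stoneSet, mem_iInter, mem_ofPred_eq]
    exact forall₃_congr fun _ _ t => ⟨fun h s ht hs => h ht hs, fun h ht s hs => h s ht hs⟩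
  rw [hinter]
  exact isClosed_iInter fun n => isClosed_iInter fun _ => isClosed_iInter fun t =>
    isClosed_iInter fun s => isClosed_imp (hopen n t) (isClosed_imp (hopen n s) isClosed_const)

lemma piecewise_mem_stoneSet [DecidableEq T] {i : X} {x : T → X} (hx : x ∈ stoneSet T i)
    (I : Finset T) : I.piecewise x (fun _ => i) ∈ stoneSet T i := by
  intro n hn
  refine (hx n hn).anti fun t ht => ?_
  have htI : t ∈ I := relSupport_piecewise_subset (fun _ => i) x I fun h => hn (ht.symm.trans h)
  exact (I.piecewise_eq_of_mem x _ htI).symm.trans ht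

end StoneSet

theorem statement14_general {T X : Type*} [Countable X] [TopologicalSpace X] [DiscreteTopology X]
    (i : X) : PseudoAleph1Compact (stoneSet T i) := by
  classical
  exact pseudoAleph1Compact_of_isClosed_of_piecewise_mem (isClosed_stoneSet i)
    fun _ hx I => piecewise_mem_stoneSet hx I

/-- for each `i ∈ {1,2}` the subspace `F i` of `Y` is pseudo-ℵ₁-compact. -/
theorem statement14 (i : PosNat) (hi : i = ⟨1, one_pos⟩ ∨ i = ⟨2, two_pos⟩) :
    PseudoAleph1Compact ↥(Fset i) :=
  statement14_general i
end

section
/- Let X = [0,1] × ∏_{t∈(0,1]} X_t where X_t = ℕ with the discrete topology for every t ∈ (0,1], for i ∈ {1,2} let F_i = {y = (y_t)_{t∈(0,1]} ∈ ℕ^{(0,1]} : for every n ∈ ℕ with n ≠ i, the set {t ∈ (0,1] : y_t = n} has at most one element}, and let A ⊆ [0,1] be nonempty. Then for every 0 ≤ α < ω₁ and each i ∈ {1,2} the set A × F_i is α-embedded in X. -/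
/-!
A continuous map `g` on `F i` into a Hausdorff space with a countable base depends on countably many
coordinates. All that is used of `F i` is that it is stable under replacing the coordinates off a
set `S` by `i`. A closing-off argument gives a countable `S` such that, for each `O = g⁻¹ U` with
`U` in a countable base, whether points of `O` with prescribed behaviour on a finite part of `S`
can be made equal to `i` on every further finite set of coordinates is already decided inside `S`.
Truncating a point of `O` to `S` then keeps it in the closure of `O`, so it cannot change `g`.

A countable dense subset of `A` handles the factor `A`. Hence a zero set of `A × F i` is
determined by a projection of `X` to a metrizable space, where closed sets are zero sets, and it is
the trace of a zero set of `X`. Traces commute with complements, countable unions and countable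
intersections, which settles the higher classes.
-/

open Set Topology

section Truncation

variable {T : Type*} {X : T → Type*}

open Classical in
/-- The truncation of `y` to the set `S` of coordinates: the coordinates off `S` are replaced by
those of the base point `a`. -/
noncomputable def truncate (a : ∀ t, X t) (S : Set T) (y : ∀ t, X t) : ∀ t, X t :=
  S.piecewise y a

variable {a : ∀ t, X t} {S : Set T} {y : ∀ t, X t} {t : T}

lemma truncate_of_mem (ht : t ∈ S) : truncate a S y t = y t := by
  simp [truncate, ht]

lemma truncate_of_notMem (ht : t ∉ S) : truncate a S y t = a t := by
  simp [truncate, ht]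

/-- A subset of a product is truncation-stable with respect to the base point `a` if it contains
all truncations of its points. In the theory of `Σ`-products such sets are called invariant. -/
def IsTruncationStable (a : ∀ t, X t) (F : Set (∀ t, X t)) : Prop :=
  ∀ S : Set T, MapsTo (truncate a S) F F

end Truncation

lemma exists_countable_forall_finset_subset {T : Type*} {D : Finset T → Set T}
    (hD : ∀ R, (D R).Countable) :
    ∃ S : Set T, S.Countable ∧ ∀ R : Finset T, ↑R ⊆ S → D R ⊆ S := by
  let enlarge (S : Set T) : Set T := S ∪ ⋃ R ∈ {R : Finset T | ↑R ⊆ S}, D R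
  have countable_enlarge {S : Set T} (hS : S.Countable) : (enlarge S).Countable := by
    have hfin : {R : Finset T | ↑R ⊆ S}.Countable := by
      refine ((countable_ofPred_finite_subset hS).preimage Finset.coe_injective).mono ?_
      exact fun R hR => ⟨R.finite_toSet, hR⟩
    exact hS.union (hfin.biUnion fun R _ => hD R)
  let s (n : ℕ) : Set T := enlarge^[n] ∅
  have hs (n : ℕ) : s (n + 1) = enlarge (s n) := Function.iterate_succ_apply' enlarge n ∅
  have hmono : Monotone s := monotone_nat_of_le_succ fun n => hs n ▸ subset_union_left
  refine ⟨⋃ n, s n, countable_iUnion fun n => ?_, fun R hR => ?_⟩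
  · induction n with
    | zero => exact countable_empty
    | succ n ih => exact hs n ▸ countable_enlarge ih
  · obtain ⟨n, hn⟩ := hmono.directed_le.exists_mem_subset_of_finset_subset_biUnion hR
    calc
      D R ⊆ enlarge (s n) := subset_union_of_subset_right (subset_biUnion_of_mem (u := D) hn) _
      _ = s (n + 1) := (hs n).symm
      _ ⊆ ⋃ n, s n := subset_iUnion s (n + 1)

section CountablyManyCoordinates

variable {T : Type*} {X : T → Type*}

/-- `P` contains a point whose restriction to `R` lies in `B` and which agrees with the base point
`a` on `C` off `R`. Varying `C`, this asks whether the further coordinates at which such a point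
differs from `a` can avoid any given finite set. -/
def HasPointBasedOn (a : ∀ t, X t) (P : Set (∀ t, X t)) (R : Finset T) (B : Set (∀ t : R, X t))
    (C : Finset T) : Prop :=
  ∃ z ∈ P, R.restrict z ∈ B ∧ ∀ t ∈ C, t ∉ R → z t = a t

variable [∀ t, TopologicalSpace (X t)] {a : ∀ t, X t} {F : Set (∀ t, X t)}

lemma exists_finset_forall_truncate_mem {O : Set (∀ t, X t)} (hO : IsOpen O) {y : ∀ t, X t}
    (hy : y ∈ O) : ∃ E : Finset T, ∀ S : Set T, ↑E ⊆ S → truncate a S y ∈ O := by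
  obtain ⟨E, u, hu, hEu⟩ := isOpen_pi_iff.1 hO y hy
  refine ⟨E, fun S hES => hEu fun t ht => ?_⟩
  rw [truncate_of_mem (hES ht)]
  exact (hu t ht).2

variable [∀ t, SecondCountableTopology (X t)]

lemma truncate_mem_closure {P : Set (∀ t, X t)} {S : Set T} {y : ∀ t, X t} (R₀ : Finset T)
    (hP : ∀ R : Finset T, ↑R ⊆ S → ↑R₀ ∩ S ⊆ (R : Set T) →
      ∀ B ∈ TopologicalSpace.countableBasis (∀ t : R, X t), R.restrict y ∈ B →
        ∀ C, HasPointBasedOn a P R B C) :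
    truncate a S y ∈ closure P := by
  classical
  refine mem_closure_iff.2 fun V hV hyV => ?_
  obtain ⟨E, u, hu, hEV⟩ := isOpen_pi_iff.1 hV _ hyV
  let R := (R₀ ∪ E).filter (· ∈ S)
  have mem_R {t : T} : t ∈ R ↔ (t ∈ R₀ ∨ t ∈ E) ∧ t ∈ S := by simp [R]
  obtain ⟨B, hB, hyB, hBu⟩ : ∃ B ∈ TopologicalSpace.countableBasis (∀ t : R, X t),
      R.restrict y ∈ B ∧ B ⊆ {w | ∀ t : R, t.1 ∈ E → w t ∈ u t} := by
    refine (TopologicalSpace.isBasis_countableBasis _).exists_subset_of_mem_open ?_ ?_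
    · intro t ht
      rw [Finset.restrict, ← truncate_of_mem (a := a) (y := y) (mem_R.1 t.2).2]
      exact (hu t ht).2
    · simp only [ofPred_forall]
      exact isOpen_iInter_of_finite fun t => isOpen_iInter_of_finite fun ht =>
        (hu t ht).1.preimage (continuous_apply t)
  obtain ⟨z, hz, hzB, hza⟩ := hP R (fun t ht => (mem_R.1 ht).2)
    (fun t ht => mem_R.2 ⟨.inl ht.1, ht.2⟩) B hB hyB E
  refine ⟨z, hEV fun t ht => ?_, hz⟩
  by_cases htR : t ∈ R
  · exact hBu hzB ⟨t, htR⟩ ht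
  · have htS : t ∉ S := fun htS => htR (mem_R.2 ⟨.inr ht, htS⟩)
    rw [hza t ht htR, ← truncate_of_notMem (a := a) (y := y) htS]
    exact (hu t ht).2

lemma IsTruncationStable.exists_countable_truncate_mem_closure (hF : IsTruncationStable a F)
    {ι : Type*} [Countable ι] {O : ι → Set (∀ t, X t)} (hO : ∀ i, IsOpen (O i)) :
    ∃ S : Set T, S.Countable ∧ ∀ i, ∀ y ∈ F ∩ O i, truncate a S y ∈ closure (F ∩ O i) := by
  have exists_decisive (i : ι) (R : Finset T) (B : Set (∀ t : R, X t)) : ∃ C,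
      HasPointBasedOn a (F ∩ O i) R B C → ∀ C', HasPointBasedOn a (F ∩ O i) R B C' := by
    by_contra! h
    obtain ⟨-, C, hC⟩ := h ∅
    exact hC (h C).1
  choose C hC using exists_decisive
  obtain ⟨S, hS, hCS⟩ := exists_countable_forall_finset_subset
    (D := fun R : Finset T =>
      ⋃ (i) (B ∈ TopologicalSpace.countableBasis (∀ t : R, X t)), ↑(C i R B))
    fun R => countable_iUnion fun i =>
      (TopologicalSpace.countable_countableBasis _).biUnion fun B _ => (C i R B).countable_toSet
  refine ⟨S, hS, fun i y ⟨hyF, hyO⟩ => ?_⟩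
  obtain ⟨E, hE⟩ := exists_finset_forall_truncate_mem (a := a) (hO i) hyO
  refine truncate_mem_closure E fun R hRS hER B hB hyB => hC i R B ?_
  refine ⟨truncate a (E ∪ R) y, ⟨hF _ hyF, hE _ subset_union_left⟩, ?_, fun t ht htR => ?_⟩
  · have heq : R.restrict (truncate a (E ∪ R) y) = R.restrict y :=
      funext fun t => truncate_of_mem (.inr t.2)
    rwa [heq]
  · have htS : t ∈ S := hCS R hRS (mem_iUnion.2 ⟨i, mem_biUnion hB ht⟩)
    exact truncate_of_notMem fun htER => htR (htER.elim (fun htE => hER ⟨htE, htS⟩) id)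

variable {Y : Type*} [TopologicalSpace Y] [T2Space Y] [SecondCountableTopology Y]

lemma IsTruncationStable.exists_countable_apply_truncate_eq (hF : IsTruncationStable a F)
    {g : F → Y} (hg : Continuous g) :
    ∃ S : Set T, S.Countable ∧ ∀ y : F, g ⟨truncate a S y, hF S y.2⟩ = g y := by
  have exists_open (U : TopologicalSpace.countableBasis Y) :
      ∃ O : Set (∀ t, X t), IsOpen O ∧ Subtype.val ⁻¹' O = g ⁻¹' U :=
    isOpen_induced_iff.1 <| (TopologicalSpace.isOpen_of_mem_countableBasis U.2).preimage hg
  choose O hO hOg using exists_open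
  have mem_O (U) (y : F) : y.1 ∈ O U ↔ g y ∈ U.1 := Set.ext_iff.1 (hOg U) y
  obtain ⟨S, hS, hcl⟩ := hF.exists_countable_truncate_mem_closure hO
  refine ⟨S, hS, fun y => by_contra fun hne => ?_⟩
  obtain ⟨V, U', hV, hU', hyV, hyU', hdisj⟩ := t2_separation hne
  obtain ⟨U, hU, hyU, hUU'⟩ :=
    (TopologicalSpace.isBasis_countableBasis Y).exists_subset_of_mem_open hyU' hU'
  obtain ⟨W, hW, hWg⟩ := isOpen_induced_iff.1 (hV.preimage hg)
  have hyW : truncate a S y ∈ W := hWg.symm.subset hyV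
  have hyO : y.1 ∈ O ⟨U, hU⟩ := (mem_O _ y).2 hyU
  obtain ⟨z, hzW, hzF, hzO⟩ := mem_closure_iff.1 (hcl _ y ⟨y.2, hyO⟩) W hW hyW
  have hzV : g ⟨z, hzF⟩ ∈ V := hWg.subset hzW
  exact disjoint_left.1 hdisj hzV (hUU' ((mem_O _ ⟨z, hzF⟩).1 hzO))

lemma IsTruncationStable.exists_countable_apply_truncate_eq_prod (hF : IsTruncationStable a F)
    {A : Type*} [TopologicalSpace A] [TopologicalSpace.SeparableSpace A]
    {f : A × F → Y} (hf : Continuous f) :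
    ∃ S : Set T, S.Countable ∧ ∀ (x : A) (y : F), f (x, ⟨truncate a S y, hF S y.2⟩) = f (x, y) := by
  obtain ⟨D, hD, hDdense⟩ := TopologicalSpace.exists_countable_dense A
  have : Countable D := hD.to_subtype
  obtain ⟨S, hS, hfS⟩ := hF.exists_countable_apply_truncate_eq
    (g := fun y (x : D) => f (x, y)) (by fun_prop)
  refine ⟨S, hS, fun x y => ?_⟩
  have heq : (fun x => f (x, ⟨truncate a S y, hF S y.2⟩)) = fun x => f (x, y) :=
    Continuous.ext_on hDdense (by fun_prop) (by fun_prop)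
      fun x hx => congrFun (hfS y) ⟨x, hx⟩
  exact congrFun heq x

end CountablyManyCoordinates

section ZeroSets

variable {Z M : Type*} [TopologicalSpace Z] [TopologicalSpace M]

lemma FunctionallyClosed.preimage {K : Set M} (hK : FunctionallyClosed K) {φ : Z → M}
    (hφ : Continuous φ) : FunctionallyClosed (φ ⁻¹' K) := by
  obtain ⟨f, hf, rfl⟩ := hK
  exact ⟨f ∘ φ, hf.comp hφ, rfl⟩

lemma functionallyClosed_of_isClosed [TopologicalSpace.PseudoMetrizableSpace M] {K : Set M}
    (hK : IsClosed K) : FunctionallyClosed K := by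
  let _ := TopologicalSpace.pseudoMetrizableSpacePseudoMetric M
  rcases K.eq_empty_or_nonempty with rfl | hne
  · exact ⟨fun _ => 1, continuous_const, by simp⟩
  · exact ⟨fun x => Metric.infDist x K, Metric.continuous_infDist_pt K,
      Set.ext fun x => hK.mem_iff_infDist_zero hne⟩

/-- `A` is z-embedded in `Z` if every zero set of the subspace `A` is the trace of a zero set
of `Z`. -/
def IsZEmbedded (A : Set Z) : Prop :=
  ∀ B : Set A, FunctionallyClosed B → ∃ C : Set Z, FunctionallyClosed C ∧ Subtype.val ⁻¹' C = B

variable {A : Set Z}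

lemma IsZEmbedded.exists_funClass (hA : IsZEmbedded A) {b : Bool} {α : Ordinal.{0}} {B : Set A}
    (hB : FunClass A b α B) : ∃ C : Set Z, FunClass Z b α C ∧ Subtype.val ⁻¹' C = B := by
  induction hB with
  | open_ B hB =>
    obtain ⟨C, hC, hCB⟩ := hA _ hB
    refine ⟨Cᶜ, .open_ _ (by rwa [FunctionallyOpen, compl_compl]), ?_⟩
    rw [preimage_compl, hCB, compl_compl]
  | closed_ B hB =>
    obtain ⟨C, hC, hCB⟩ := hA _ hB
    exact ⟨C, .closed_ _ hC, hCB⟩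
  | union α B β hα hβ _ ih =>
    choose C hC hCB using ih
    exact ⟨⋃ n, C n, .union α C β hα hβ hC, by simp only [preimage_iUnion, hCB]⟩
  | inter α B β hα hβ _ ih =>
    choose C hC hCB using ih
    exact ⟨⋂ n, C n, .inter α C β hα hβ hC, by simp only [preimage_iInter, hCB]⟩

lemma IsZEmbedded.isAlphaEmbedded (hA : IsZEmbedded A) (α : Ordinal.{0}) :
    IsAlphaEmbedded α A := by
  intro B hBA hB
  obtain ⟨C, hC, hCB⟩ := hA.exists_funClass hB
  refine ⟨C, hC, ?_⟩
  rw [inter_comm, (Subtype.preimage_val_eq_preimage_val_iff _ _ _).1 hCB, inter_eq_right.2 hBA]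

end ZeroSets

section Product

variable {W T : Type*} {X : T → Type*} [TopologicalSpace W] [RegularSpace W]
  [SecondCountableTopology W] [∀ t, TopologicalSpace (X t)] [∀ t, RegularSpace (X t)]
  [∀ t, SecondCountableTopology (X t)] {a : ∀ t, X t} {F : Set (∀ t, X t)}

lemma functionallyClosed_preimage_truncate (a : ∀ t, X t) {S : Set T} (hS : S.Countable)
    {C : Set (W × ∀ t, X t)} (hC : IsClosed C) :
    FunctionallyClosed (Prod.map id (truncate a S) ⁻¹' C) := by
  classical
  have : Countable S := hS.to_subtype
  let extend (y : ∀ t : S, X t) : ∀ t, X t :=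
    (Homeomorph.piEquivPiSubtypeProd (· ∈ S) X).symm (y, fun t => a t)
  have truncate_eq : truncate a S = extend ∘ proj S := by
    ext y t
    by_cases ht : t ∈ S <;> simp [truncate, extend, proj, ht]
  have hextend : Continuous extend := by fun_prop
  have hproj : Continuous (proj (X := X) S) := continuous_pi fun t => continuous_apply t.1
  have hK : IsClosed (Prod.map id extend ⁻¹' C) := hC.preimage (continuous_id.prodMap hextend)
  rw [truncate_eq]
  exact (functionallyClosed_of_isClosed hK).preimage (continuous_id.prodMap hproj)

lemma IsTruncationStable.isZEmbedded_prod (hF : IsTruncationStable a F) (A : Set W) :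
    IsZEmbedded (A ×ˢ F) := by
  rintro _ ⟨f, hf, rfl⟩
  obtain ⟨S, hS, hfS⟩ := hF.exists_countable_apply_truncate_eq_prod
    (f := f ∘ (Homeomorph.Set.prod A F).symm) (by fun_prop)
  obtain ⟨C, hC, hCf⟩ := isClosed_induced_iff.1 (isClosed_singleton.preimage hf)
  refine ⟨_, functionallyClosed_preimage_truncate a hS hC, ?_⟩
  ext ⟨⟨x, y⟩, hx, hy⟩
  have hy' : truncate a S y ∈ F := hF S hy
  calc
    (x, truncate a S y) ∈ C ↔ f ⟨(x, truncate a S y), hx, hy'⟩ = 0 :=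
      Set.ext_iff.1 hCf ⟨(x, truncate a S y), hx, hy'⟩
    _ ↔ f ⟨(x, y), hx, hy⟩ = 0 := Eq.congr_left (hfS ⟨x, hx⟩ ⟨y, hy⟩)

theorem statement15_general (hF : IsTruncationStable a F) (A : Set W) (α : Ordinal.{0}) :
    IsAlphaEmbedded α (A ×ˢ F) :=
  (hF.isZEmbedded_prod A).isAlphaEmbedded α

end Product

lemma isTruncationStable_Fset (i : PosNat) : IsTruncationStable (fun _ => i) (Fset i) := by
  intro S y hy n hn
  refine (hy n hn).anti fun t (ht : truncate _ S y t = n) => ?_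
  by_cases htS : t ∈ S
  · exact (truncate_of_mem htS).symm.trans ht
  · exact absurd (ht.symm.trans (truncate_of_notMem htS)) hn

/-- for every nonempty `A ⊆ [0,1]`, every `α < ω₁` and each `i ∈ {1,2}`,
the set `A × F i` is α-embedded in `X = [0,1] × ℕ^{(0,1]}`. -/
theorem statement15 (A : Set ↥(Set.Icc (0 : ℝ) 1)) (hA : A.Nonempty)
    (α : Ordinal.{0}) (hα : α < (Cardinal.aleph 1).ord)
    (i : PosNat) (hi : i = ⟨1, one_pos⟩ ∨ i = ⟨2, two_pos⟩) :
    IsAlphaEmbedded α {p : Xprod | p.1 ∈ A ∧ p.2 ∈ Fset i} :=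
  statement15_general (isTruncationStable_Fset i) A α
end
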